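/- arXiv:0805.2002 — 3 statements merged into one kernel-verified Lean document; each statement's English description precedes it below -/
import Mathlib

section
/- Let X ∼ N(μ, σ²I_d) on ℝ^d and let f : ℝ^d → (0,∞) be twice continuously differentiable with appropriate integrability. Then E[‖X + σ² ∇ log f(X) − μ‖²] = σ²d + 4σ⁴ E[ Δ√f(X) / √f(X) ], where Δ is the Laplacian on ℝ^d. -/
open MeasureTheory ProbabilityTheory Real Filter

noncomputable def gaussPi (d : ℕ) (m : EuclideanSpace ℝ (Fin d)) (v : ℝ) :
    Measure (EuclideanSpace ℝ (Fin d)) :=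
  (Measure.pi fun i : Fin d => gaussianReal (m i) v.toNNReal).map
    ⇑(EuclideanSpace.equiv (Fin d) ℝ).symm

/-- Laplacian on `ℝ^d` as the sum of second partial derivatives. -/
noncomputable def lap {d : ℕ} (F : EuclideanSpace ℝ (Fin d) → ℝ)
    (x : EuclideanSpace ℝ (Fin d)) : ℝ :=
  ∑ i : Fin d, fderiv ℝ (fun y => fderiv ℝ F y (EuclideanSpace.single i 1)) x
    (EuclideanSpace.single i 1)



lemma pi_gauss_withDensity (d : ℕ) (m : Fin d → ℝ) (v : NNReal) (hv : v ≠ 0) :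
    (Measure.pi fun i : Fin d => gaussianReal (m i) v) =
      (volume : Measure (Fin d → ℝ)).withDensity
        (fun x => ENNReal.ofReal (∏ i, gaussianPDFReal (m i) v (x i))) := by
  symm
  refine (Measure.pi_eq fun s hs => ?_).symm
  rw [withDensity_apply _ (MeasurableSet.univ_pi hs)]
  have hvol : (volume : Measure (Fin d → ℝ)).restrict (Set.univ.pi s) =
      Measure.pi fun i => (volume : Measure ℝ).restrict (s i) := by
    rw [volume_pi, Measure.restrict_pi_pi]
  rw [hvol, ← ofReal_integral_eq_lintegral_ofReal]
  · rw [integral_fintype_prod_eq_prod (fun i t => gaussianPDFReal (m i) v t),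
      ENNReal.ofReal_prod_of_nonneg]
    · exact Finset.prod_congr rfl fun i _ => (gaussianReal_apply_eq_integral _ hv _).symm
    · intro i _
      exact integral_nonneg fun t => gaussianPDFReal_nonneg _ _ _
  · exact Integrable.fintype_prod (f := fun i t => gaussianPDFReal (m i) v t)
      fun i => (integrable_gaussianPDFReal _ _).restrict
  · exact Filter.Eventually.of_forall fun x => Finset.prod_nonneg fun i _ => gaussianPDFReal_nonneg _ _ _

lemma gaussPi_eq (d : ℕ) (m : EuclideanSpace ℝ (Fin d)) (σ : ℝ) (hσ : 0 < σ) :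
    ∃ c : ℝ, 0 ≤ c ∧ gaussPi d m (σ ^ 2) =
      (volume : Measure (EuclideanSpace ℝ (Fin d))).withDensity
        (fun x => ENNReal.ofReal (c * Real.exp (-‖x - m‖ ^ 2 / (2 * σ ^ 2)))) := by
  refine ⟨∏ _i : Fin d, (√(2 * π * (σ ^ 2).toNNReal))⁻¹, by positivity, ?_⟩
  have hv : (σ ^ 2).toNNReal ≠ 0 := by
    simp [Real.toNNReal_eq_zero]; positivity
  unfold gaussPi
  rw [pi_gauss_withDensity d _ _ hv]
  ext s hs
  have hmp := PiLp.volume_preserving_toLp (Fin d)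
  have hme : ⇑(EuclideanSpace.equiv (Fin d) ℝ).symm = @WithLp.toLp 2 (Fin d → ℝ) := rfl
  rw [hme, Measure.map_apply hmp.measurable hs, withDensity_apply _ (hmp.measurable hs),
    withDensity_apply _ hs, ← hmp.setLIntegral_comp_preimage hs (by fun_prop)]
  refine lintegral_congr fun x => ?_
  congr 1
  simp only [gaussianPDFReal, Finset.prod_mul_distrib, ← Real.exp_sum]
  congr 2
  rw [EuclideanSpace.norm_sq_eq, ← Finset.sum_neg_distrib, Finset.sum_div]
  refine Finset.sum_congr rfl fun i _ => ?_
  simp [Real.coe_toNNReal _ (sq_nonneg σ)]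

instance gaussPi_prob (d : ℕ) (m : EuclideanSpace ℝ (Fin d)) (v : ℝ) :
    IsProbabilityMeasure (gaussPi d m v) := by
  unfold gaussPi
  exact Measure.isProbabilityMeasure_map (by fun_prop)

lemma gaussPi_coord (d : ℕ) (m : EuclideanSpace ℝ (Fin d)) (v : ℝ) (i : Fin d) :
    MeasurePreserving (fun x : EuclideanSpace ℝ (Fin d) => x i) (gaussPi d m v)
      (gaussianReal (m i) v.toNNReal) := by
  refine ⟨by fun_prop, ?_⟩
  unfold gaussPi
  rw [Measure.map_map (by fun_prop) (by fun_prop)]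
  exact (measurePreserving_eval (fun i : Fin d => gaussianReal (m i) v.toNNReal) i).map_eq

lemma memLp_coord (d : ℕ) (m : EuclideanSpace ℝ (Fin d)) (v : ℝ) (i : Fin d) :
    MemLp (fun x : EuclideanSpace ℝ (Fin d) => x i - m i) 2 (gaussPi d m v) := by
  have h1 : MemLp (fun t : ℝ => t - m i) 2 (gaussianReal (m i) v.toNNReal) :=
    (memLp_id_gaussianReal' 2 (by simp)).sub (memLp_const _)
  exact h1.comp_measurePreserving (gaussPi_coord d m v i)

lemma var_coord (d : ℕ) (m : EuclideanSpace ℝ (Fin d)) (v : ℝ) (hv : 0 ≤ v) (i : Fin d) :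
    ∫ x, (x i - m i) ^ 2 ∂(gaussPi d m v) = v := by
  have h := (variance_fun_id_gaussianReal (μ := m i) (v := v.toNNReal))
  rw [variance_eq_integral (by fun_prop), integral_id_gaussianReal, Real.coe_toNNReal _ hv] at h
  rw [← (gaussPi_coord d m v i).map_eq, integral_map (by fun_prop) (by fun_prop)] at h
  exact h

lemma cc_integrable (d : ℕ) (m : EuclideanSpace ℝ (Fin d)) (v : ℝ)
    {F : EuclideanSpace ℝ (Fin d) → ℝ} (hF : Continuous F) (hc : HasCompactSupport F) :
    Integrable F (gaussPi d m v) :=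
  hF.integrable_of_hasCompactSupport hc

lemma stein_cc (d : ℕ) (m : EuclideanSpace ℝ (Fin d)) (σ : ℝ) (hσ : 0 < σ)
    {F : EuclideanSpace ℝ (Fin d) → ℝ} (hF : ContDiff ℝ 1 F) (hc : HasCompactSupport F)
    (i : Fin d) :
    ∫ x, (x i - m i) * F x ∂(gaussPi d m (σ ^ 2)) =
      σ ^ 2 * ∫ x, fderiv ℝ F x (EuclideanSpace.single i 1) ∂(gaussPi d m (σ ^ 2)) := by
  obtain ⟨c, hc0, hγ⟩ := gaussPi_eq d m σ hσ
  set ρ : EuclideanSpace ℝ (Fin d) → ℝ :=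
    fun x => c * Real.exp (-‖x - m‖ ^ 2 / (2 * σ ^ 2)) with hρ
  have hρs : ContDiff ℝ 1 ρ := by
    have : ContDiff ℝ 1 (fun x : EuclideanSpace ℝ (Fin d) => ‖x - m‖ ^ 2) :=
      (contDiff_id.sub contDiff_const).norm_sq ℝ
    exact contDiff_const.mul ((this.neg.div_const _).exp)
  have hρd : ∀ x, fderiv ℝ ρ x (EuclideanSpace.single i 1) = -(x i - m i) / σ ^ 2 * ρ x := by
    intro x
    have h1 : HasFDerivAt (fun x : EuclideanSpace ℝ (Fin d) => ‖x - m‖ ^ 2)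
        (2 • (innerSL ℝ (x - m)).comp (ContinuousLinearMap.id ℝ _)) x :=
      ((hasFDerivAt_id x).sub_const m).norm_sq
    have h2 := ((h1.neg.mul_const (2 * σ ^ 2)⁻¹).exp).const_mul c
    have h3 : fderiv ℝ ρ x = _ := HasFDerivAt.fderiv h2
    rw [h3]
    simp [hρ, EuclideanSpace.inner_single_right, div_eq_mul_inv]
    field_simp
    ring
  have hI : ∀ G : EuclideanSpace ℝ (Fin d) → ℝ,
      ∫ x, G x ∂(gaussPi d m (σ ^ 2)) = ∫ x, ρ x * G x := by
    intro G
    rw [hγ, integral_withDensity_eq_integral_toReal_smul (by fun_prop) (by simp)]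
    refine integral_congr_ae (Filter.Eventually.of_forall fun x => ?_)
    have : 0 ≤ ρ x := by positivity
    change (ENNReal.ofReal (ρ x)).toReal • G x = _
    rw [ENNReal.toReal_ofReal this, smul_eq_mul]
  rw [hI, hI]
  have hρc := hρs.continuous
  have hρ' := hρs.continuous_fderiv one_ne_zero
  have hF' := hF.continuous_fderiv one_ne_zero
  have hFc := hF.continuous
  rw [integral_mul_fderiv_eq_neg_fderiv_mul_of_integrable (μ := volume)]
  · rw [← integral_neg, ← integral_const_mul]
    refine integral_congr_ae (Filter.Eventually.of_forall fun x => ?_)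
    simp only [hρd]
    field_simp
  · exact (by fun_prop : Continuous _).integrable_of_hasCompactSupport hc.mul_left
  · refine (by fun_prop : Continuous _).integrable_of_hasCompactSupport ?_
    exact HasCompactSupport.mul_left (hc.fderiv_apply ℝ _)
  · exact (by fun_prop : Continuous _).integrable_of_hasCompactSupport hc.mul_left
  · exact fun x _ => (hρs.differentiable one_ne_zero) x
  · exact fun x _ => (hF.differentiable one_ne_zero) x

lemma stein_div (d : ℕ) (m : EuclideanSpace ℝ (Fin d)) (σ : ℝ) (hσ : 0 < σ)
    (g : Fin d → EuclideanSpace ℝ (Fin d) → ℝ) (hg : ∀ i, ContDiff ℝ 1 (g i))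
    (hgi : ∀ i, Integrable (g i) (gaussPi d m (σ ^ 2)))
    (hA : Integrable (fun x => ∑ i, (x i - m i) * g i x) (gaussPi d m (σ ^ 2)))
    (hB : Integrable (fun x => ∑ i, fderiv ℝ (g i) x (EuclideanSpace.single i 1))
      (gaussPi d m (σ ^ 2))) :
    ∫ x, ∑ i, (x i - m i) * g i x ∂(gaussPi d m (σ ^ 2)) =
      σ ^ 2 * ∫ x, ∑ i, fderiv ℝ (g i) x (EuclideanSpace.single i 1)
        ∂(gaussPi d m (σ ^ 2)) := by
  set γ := gaussPi d m (σ ^ 2) with hγ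
  let φ : ContDiffBump (0 : EuclideanSpace ℝ (Fin d)) := ⟨1, 2, by norm_num, by norm_num⟩
  have hφ : ContDiff ℝ 1 φ := φ.contDiff
  have hφc : HasCompactSupport φ := φ.hasCompactSupport
  have hφ' : Continuous (fderiv ℝ φ) := hφ.continuous_fderiv one_ne_zero
  obtain ⟨C, hC⟩ := (hφc.fderiv ℝ).exists_bound_of_continuous hφ'
  let a : ℕ → ℝ := fun n => 1 / ((n : ℝ) + 1)
  have ha0 : ∀ n, 0 < a n := fun n => by positivity
  have ha1 : ∀ n, a n ≤ 1 := fun n => by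
    simp only [a]; rw [div_le_one (by positivity)]; linarith [n.cast_nonneg (α := ℝ)]
  have hat : Tendsto a atTop (nhds 0) := tendsto_one_div_add_atTop_nhds_zero_nat
  let χ : ℕ → EuclideanSpace ℝ (Fin d) → ℝ := fun n x => φ (a n • x)
  have hχs : ∀ n, ContDiff ℝ 1 (χ n) := fun n => hφ.comp (contDiff_const_smul (a n))
  have hχc : ∀ n, HasCompactSupport (χ n) := fun n => hφc.comp_smul (ha0 n).ne'
  have hχ1 : ∀ n x, ‖χ n x‖ ≤ 1 := fun n x => by
    rw [Real.norm_of_nonneg φ.nonneg]; exact φ.le_one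
  have hχd : ∀ n x v, fderiv ℝ (χ n) x v = a n * fderiv ℝ φ (a n • x) v := by
    intro n x v
    have h1 : HasFDerivAt (fun x : EuclideanSpace ℝ (Fin d) => a n • x)
        (a n • ContinuousLinearMap.id ℝ _) x := (hasFDerivAt_id x).const_smul (a n)
    have h2 := ((hφ.differentiable one_ne_zero) (a n • x)).hasFDerivAt.comp x h1
    have h3 : fderiv ℝ (χ n) x = _ := h2.fderiv
    rw [h3]; simp
  have hχt : ∀ x, Tendsto (fun n => χ n x) atTop (nhds 1) := by
    intro x
    have h1 : Tendsto (fun n => a n • x) atTop (nhds ((0 : ℝ) • x)) := hat.smul_const x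
    have h2 := (hφ.continuous.tendsto ((0 : ℝ) • x)).comp h1
    have h3 : φ ((0 : ℝ) • x) = 1 := by
      rw [zero_smul]; exact φ.one_of_mem_closedBall (by simp [φ])
    rw [h3] at h2
    exact h2
  -- cutoff convergence
  have hcut : ∀ G : EuclideanSpace ℝ (Fin d) → ℝ, Integrable G γ →
      Tendsto (fun n => ∫ x, χ n x * G x ∂γ) atTop (nhds (∫ x, G x ∂γ)) := by
    intro G hG
    refine tendsto_integral_of_dominated_convergence (fun x => ‖G x‖) ?_ hG.norm ?_ ?_
    · exact fun n => (hχs n).continuous.aestronglyMeasurable.mul hG.aestronglyMeasurable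
    · refine fun n => Filter.Eventually.of_forall fun x => ?_
      rw [norm_mul]
      exact mul_le_of_le_one_left (norm_nonneg _) (hχ1 n x)
    · refine Filter.Eventually.of_forall fun x => ?_
      simpa using (hχt x).mul_const (G x)
  have hrem : ∀ i, Tendsto (fun n => ∫ x, fderiv ℝ (χ n) x (EuclideanSpace.single i 1) * g i x ∂γ)
      atTop (nhds 0) := by
    intro i
    have hb : ∀ n x, ‖fderiv ℝ (χ n) x (EuclideanSpace.single i 1) * g i x‖
        ≤ a n * (C * ‖g i x‖) := by
      intro n x
      rw [hχd, norm_mul, norm_mul, Real.norm_of_nonneg (ha0 n).le, mul_assoc]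
      have h1 : ‖fderiv ℝ φ (a n • x) (EuclideanSpace.single i 1)‖ ≤ C := by
        refine (ContinuousLinearMap.le_opNorm _ _).trans ?_
        simpa using hC (a n • x)
      have := ha0 n
      gcongr
    refine squeeze_zero_norm (a := fun n => a n * ∫ x, C * ‖g i x‖ ∂γ) (fun n => ?_) ?_
    · rw [← integral_const_mul]
      exact norm_integral_le_of_norm_le (((hgi i).norm.const_mul C).const_mul _)
        (Filter.Eventually.of_forall (hb n))
    · simpa using hat.mul_const (∫ x, C * ‖g i x‖ ∂γ)
  have key : ∀ n, ∫ x, χ n x * (∑ i, (x i - m i) * g i x) ∂γ =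
      σ ^ 2 * (∑ i, ∫ x, fderiv ℝ (χ n) x (EuclideanSpace.single i 1) * g i x ∂γ +
        ∫ x, χ n x * ∑ i, fderiv ℝ (g i) x (EuclideanSpace.single i 1) ∂γ) := by
    intro n
    have hcχ := (hχs n).continuous
    have hcg := fun i => (hg i).continuous
    have hcχ' := (hχs n).continuous_fderiv one_ne_zero
    have hcg' := fun i => (hg i).continuous_fderiv one_ne_zero
    have i1 : ∀ i, Integrable (fun x => (x i - m i) * (χ n x * g i x)) γ := fun i =>
      cc_integrable d m _ (by fun_prop) (HasCompactSupport.mul_left (hχc n).mul_right)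
    have i2 : ∀ i, Integrable
        (fun x => fderiv ℝ (χ n) x (EuclideanSpace.single i 1) * g i x) γ := fun i =>
      cc_integrable d m _ (by fun_prop) (HasCompactSupport.mul_right ((hχc n).fderiv_apply ℝ _))
    have i3 : ∀ i, Integrable
        (fun x => χ n x * fderiv ℝ (g i) x (EuclideanSpace.single i 1)) γ := fun i =>
      cc_integrable d m _ (by fun_prop) (hχc n).mul_right
    have e1 : ∫ x, χ n x * (∑ i, (x i - m i) * g i x) ∂γ =
        ∑ i, ∫ x, (x i - m i) * (χ n x * g i x) ∂γ := by
      rw [← integral_finsetSum _ fun i _ => i1 i]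
      refine integral_congr_ae (Filter.Eventually.of_forall fun x => ?_)
      simp only [Finset.mul_sum]
      exact Finset.sum_congr rfl fun i _ => by ring
    have e2 : ∫ x, χ n x * ∑ i, fderiv ℝ (g i) x (EuclideanSpace.single i 1) ∂γ =
        ∑ i, ∫ x, χ n x * fderiv ℝ (g i) x (EuclideanSpace.single i 1) ∂γ := by
      rw [← integral_finsetSum _ fun i _ => i3 i]
      simp only [Finset.mul_sum]
    rw [e1, e2, ← Finset.sum_add_distrib, Finset.mul_sum]
    refine Finset.sum_congr rfl fun i _ => ?_
    rw [stein_cc d m σ hσ ((hχs n).mul (hg i)) (hχc n).mul_right i, ← integral_add (i2 i) (i3 i)]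
    congr 1
    refine integral_congr_ae (Filter.Eventually.of_forall fun x => ?_)
    have h1 := (((hχs n).differentiable one_ne_zero) x).hasFDerivAt.mul
      (((hg i).differentiable one_ne_zero) x).hasFDerivAt
    have h2 : fderiv ℝ (fun x => χ n x * g i x) x = _ := h1.fderiv
    simp only [h2]
    simp
    ring
  have l1 := hcut _ hA
  have l2 : Tendsto (fun n => σ ^ 2 *
      (∑ i, ∫ x, fderiv ℝ (χ n) x (EuclideanSpace.single i 1) * g i x ∂γ +
        ∫ x, χ n x * ∑ i, fderiv ℝ (g i) x (EuclideanSpace.single i 1) ∂γ)) atTop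
      (nhds (σ ^ 2 * (∑ _i : Fin d, (0 : ℝ) +
        ∫ x, ∑ i, fderiv ℝ (g i) x (EuclideanSpace.single i 1) ∂γ))) :=
    ((tendsto_finsetSum _ fun i _ => hrem i).add (hcut _ hB)).const_mul _
  simp only [key] at l1
  have := tendsto_nhds_unique l1 l2
  simpa using this

lemma lap_sqrt {d : ℕ} {f : EuclideanSpace ℝ (Fin d) → ℝ}
    (hf : ContDiff ℝ 2 f) (hfpos : ∀ x, 0 < f x) (x : EuclideanSpace ℝ (Fin d)) :
    lap (fun y => Real.sqrt (f y)) x / Real.sqrt (f x) =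
      (1 / 2) * (∑ i, fderiv ℝ (fun y => fderiv ℝ (fun y => Real.log (f y)) y
        (EuclideanSpace.single i 1)) x (EuclideanSpace.single i 1)) +
      (1 / 4) * ∑ i, (fderiv ℝ (fun y => Real.log (f y)) x (EuclideanSpace.single i 1)) ^ 2 := by
  set h : EuclideanSpace ℝ (Fin d) → ℝ := fun y => Real.log (f y) with hh
  have hhs : ContDiff ℝ 2 h := hf.log fun y => (hfpos y).ne'
  have hs : (fun y => Real.sqrt (f y)) = fun y => Real.exp (h y * (1 / 2)) := by
    funext y
    rw [hh, Real.sqrt_eq_rpow, Real.rpow_def_of_pos (hfpos y)]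
  have hd : ∀ y, HasFDerivAt (fun y => Real.exp (h y * (1 / 2)))
      (Real.exp (h y * (1 / 2)) • ((1 / 2 : ℝ) • fderiv ℝ h y)) y := fun y =>
    ((((hhs.differentiable two_ne_zero) y).hasFDerivAt.mul_const (1 / 2)).exp)
  have hsx : Real.sqrt (f x) = Real.exp (h x * (1 / 2)) := congrFun hs x
  have hpos : 0 < Real.exp (h x * (1 / 2)) := Real.exp_pos _
  rw [hsx, div_eq_iff hpos.ne', hs, lap, Finset.mul_sum, Finset.mul_sum, ← Finset.sum_add_distrib,
    Finset.sum_mul]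
  refine Finset.sum_congr rfl fun i _ => ?_
  have e1 : (fun y => fderiv ℝ (fun y => Real.exp (h y * (1 / 2))) y (EuclideanSpace.single i 1))
      = fun y => Real.exp (h y * (1 / 2)) *
        ((1 / 2 : ℝ) * fderiv ℝ h y (EuclideanSpace.single i 1)) := by
    funext y
    rw [(hd y).fderiv]; simp
  have hg : ContDiff ℝ 1 (fun y => fderiv ℝ h y (EuclideanSpace.single i 1)) :=
    (hhs.fderiv_right (m := 1) (by norm_num)).clm_apply contDiff_const
  have h2 := (hd x).mul (((hg.differentiable one_ne_zero) x).hasFDerivAt.const_mul (1 / 2 : ℝ))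
  rw [e1]
  have h3 := h2.fderiv
  erw [h3]
  simp
  ring

lemma grad_apply {d : ℕ} {h : EuclideanSpace ℝ (Fin d) → ℝ} (x : EuclideanSpace ℝ (Fin d))
    (i : Fin d) : (gradient h x) i = fderiv ℝ h x (EuclideanSpace.single i 1) := by
  have : inner ℝ (gradient h x) (EuclideanSpace.single i 1) =
      fderiv ℝ h x (EuclideanSpace.single i 1) := by
    simp only [gradient, InnerProductSpace.toDual_symm_apply]
  rw [← this, EuclideanSpace.inner_single_right]
  simp

/-- Stein's unbiased risk identity: for `X ∼ N(m, σ²I_d)` and positive `C²` `f`,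
`E[‖X + σ²∇log f(X) − m‖²] = σ²d + 4σ⁴ E[Δ√f(X)/√f(X)]`. -/
theorem stein_risk_identity
    (d : ℕ) (m : EuclideanSpace ℝ (Fin d)) (σ : ℝ) (hσ : 0 < σ)
    (f : EuclideanSpace ℝ (Fin d) → ℝ)
    (hf : ContDiff ℝ 2 f) (hfpos : ∀ x, 0 < f x)
    (hint1 : Integrable
      (fun x => ‖x + σ ^ 2 • gradient (fun y => Real.log (f y)) x - m‖ ^ 2)
      (gaussPi d m (σ ^ 2)))
    (hint2 : Integrable
      (fun x => ‖gradient (fun y => Real.log (f y)) x‖ ^ 2) (gaussPi d m (σ ^ 2)))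
    (hint3 : Integrable
      (fun x => lap (fun y => Real.sqrt (f y)) x / Real.sqrt (f x))
      (gaussPi d m (σ ^ 2))) :
    ∫ x, ‖x + σ ^ 2 • gradient (fun y => Real.log (f y)) x - m‖ ^ 2
        ∂(gaussPi d m (σ ^ 2)) =
      σ ^ 2 * d +
        4 * σ ^ 4 *
          ∫ x, lap (fun y => Real.sqrt (f y)) x / Real.sqrt (f x)
            ∂(gaussPi d m (σ ^ 2)) := by
  set γ := gaussPi d m (σ ^ 2) with hγ
  set h : EuclideanSpace ℝ (Fin d) → ℝ := fun y => Real.log (f y) with hh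
  have hhs : ContDiff ℝ 2 h := hf.log fun y => (hfpos y).ne'
  let g : Fin d → EuclideanSpace ℝ (Fin d) → ℝ :=
    fun i x => fderiv ℝ h x (EuclideanSpace.single i 1)
  have hg : ∀ i, ContDiff ℝ 1 (g i) := fun i =>
    (hhs.fderiv_right (m := 1) (by norm_num)).clm_apply contDiff_const
  have hgrad : ∀ x, ‖gradient h x‖ ^ 2 = ∑ i, g i x ^ 2 := by
    intro x
    rw [EuclideanSpace.norm_sq_eq]
    refine Finset.sum_congr rfl fun i _ => ?_
    rw [grad_apply, Real.norm_eq_abs, sq_abs]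
  simp only [hgrad] at hint2
  have hgL : ∀ i, MemLp (g i) 2 γ := by
    intro i
    rw [memLp_two_iff_integrable_sq (hg i).continuous.aestronglyMeasurable]
    refine hint2.mono' ((hg i).continuous.pow 2).aestronglyMeasurable
      (Filter.Eventually.of_forall fun x => ?_)
    rw [Real.norm_of_nonneg (sq_nonneg _)]
    exact Finset.single_le_sum (f := fun i => g i x ^ 2) (fun i _ => sq_nonneg _)
      (Finset.mem_univ i)
  have hgi : ∀ i, Integrable (g i) γ := fun i => (hgL i).integrable (by norm_num)
  have hA : Integrable (fun x => ∑ i, (x i - m i) * g i x) γ :=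
    integrable_finsetSum _ fun i _ => (memLp_coord d m (σ ^ 2) i).integrable_mul (hgL i)
  have hlap : ∀ x, lap (fun y => Real.sqrt (f y)) x / Real.sqrt (f x) =
      (1 / 2) * (∑ i, fderiv ℝ (g i) x (EuclideanSpace.single i 1)) +
        (1 / 4) * ∑ i, g i x ^ 2 := fun x => lap_sqrt hf hfpos x
  simp only [hlap] at hint3 ⊢
  have hB : Integrable (fun x => ∑ i, fderiv ℝ (g i) x (EuclideanSpace.single i 1)) γ := by
    have := (hint3.sub (hint2.const_mul (1 / 4))).const_mul 2
    refine this.congr (Filter.Eventually.of_forall fun x => ?_)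
    simp only [Pi.sub_apply]
    ring
  have hS := stein_div d m σ hσ g hg hgi hA hB
  have hsq : Integrable (fun x : EuclideanSpace ℝ (Fin d) => ∑ i, (x i - m i) ^ 2) γ :=
    integrable_finsetSum _ fun i _ => (memLp_coord d m (σ ^ 2) i).integrable_sq
  have hV : ∫ x, ∑ i, (x i - m i) ^ 2 ∂γ = σ ^ 2 * d := by
    rw [integral_finsetSum _ fun i _ => (memLp_coord d m (σ ^ 2) i).integrable_sq]
    simp only [hγ, var_coord d m (σ ^ 2) (sq_nonneg σ)]
    simp [mul_comm]
  have hexp : ∀ x, ‖x + σ ^ 2 • gradient h x - m‖ ^ 2 =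
      (∑ i, (x i - m i) ^ 2 + 2 * σ ^ 2 * ∑ i, (x i - m i) * g i x) +
        σ ^ 4 * ∑ i, g i x ^ 2 := by
    intro x
    rw [EuclideanSpace.norm_sq_eq, Finset.mul_sum, Finset.mul_sum, ← Finset.sum_add_distrib,
      ← Finset.sum_add_distrib]
    refine Finset.sum_congr rfl fun i _ => ?_
    rw [Real.norm_eq_abs, sq_abs]
    simp only [PiLp.add_apply, PiLp.sub_apply, PiLp.smul_apply, grad_apply, smul_eq_mul, g]
    ring
  simp only [hexp]
  have hsum : Integrable (fun x : EuclideanSpace ℝ (Fin d) => ∑ i, (x i - m i) ^ 2 +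
      2 * σ ^ 2 * ∑ i, (x i - m i) * g i x) γ := hsq.add (hA.const_mul _)
  rw [← hγ] at hS
  rw [integral_add hsum (hint2.const_mul _),
    integral_add hsq (hA.const_mul _), integral_add (hB.const_mul _) (hint2.const_mul _),
    integral_const_mul, integral_const_mul, integral_const_mul, integral_const_mul, hV, hS]
  ring
end

section
/- Let X ∼ N(μ, σ²I_d) with d ≥ 3 and let f : ℝ^d → (0,∞) be C² with the needed integrability. If Δ√f(x) ≤ 0 for Lebesgue-a.e. x and Δ√f < 0 on a set of positive Lebesgue measure, then E[‖X + σ²∇ log f(X) − μ‖²] < σ²d, i.e. the estimator X + σ²∇ log f(X) is superefficient. -/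
open MeasureTheory ProbabilityTheory Real Filter

noncomputable def dens {d : ℕ} (m : EuclideanSpace ℝ (Fin d)) (v : ℝ) (x : EuclideanSpace ℝ (Fin d)) : ℝ :=
  ∏ i : Fin d, gaussianPDFReal (m i) v.toNNReal (x i)

lemma pi_gauss_density (d : ℕ) (m : Fin d → ℝ) (v : NNReal) (hv : v ≠ 0) :
    (Measure.pi fun i : Fin d => gaussianReal (m i) v) =
      (volume : Measure (Fin d → ℝ)).withDensity
        (fun x => ENNReal.ofReal (∏ i : Fin d, gaussianPDFReal (m i) v (x i))) := by
  apply Measure.pi_eq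
  intro s hs
  rw [withDensity_apply _ (MeasurableSet.univ_pi hs), volume_pi, Measure.restrict_pi_pi]
  have hI : Integrable (fun x : Fin d → ℝ => ∏ i : Fin d, gaussianPDFReal (m i) v (x i))
      (Measure.pi fun i : Fin d => (volume : Measure ℝ).restrict (s i)) :=
    Integrable.fintype_prod_dep (f := fun i => gaussianPDFReal (m i) v)
      (fun i => (integrable_gaussianPDFReal (m i) v).restrict)
  rw [← ofReal_integral_eq_lintegral_ofReal hI
    (ae_of_all _ fun x => Finset.prod_nonneg fun i _ => gaussianPDFReal_nonneg _ _ _)]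
  rw [integral_fintype_prod_eq_prod (f := fun i => gaussianPDFReal (m i) v),
    ENNReal.ofReal_prod_of_nonneg]
  · refine Finset.prod_congr rfl fun i _ => ?_
    rw [gaussianReal_apply_eq_integral _ hv]
  · intro i _
    exact integral_nonneg fun x => gaussianPDFReal_nonneg _ _ _

lemma gaussPi_density (d : ℕ) (m : EuclideanSpace ℝ (Fin d)) (v : ℝ) (hv : 0 < v) :
    gaussPi d m v = (volume : Measure (EuclideanSpace ℝ (Fin d))).withDensity
      (fun x => ENNReal.ofReal (dens m v x)) := by
  unfold gaussPi
  rw [pi_gauss_density d (fun i => m i) _ (by simpa using hv)]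
  have hmp := (EuclideanSpace.volume_preserving_symm_measurableEquiv_toLp (Fin d)).symm
  have he : ⇑(EuclideanSpace.equiv (Fin d) ℝ).symm = ⇑(MeasurableEquiv.toLp 2 (Fin d → ℝ)) := rfl
  rw [he]
  ext s hs
  rw [Measure.map_apply (MeasurableEquiv.measurable _) hs,
    withDensity_apply _ ((MeasurableEquiv.measurable _) hs), withDensity_apply _ hs]
  exact hmp.setLIntegral_comp_preimage_emb (MeasurableEquiv.measurableEmbedding _)
    (fun x => ENNReal.ofReal (dens m v x)) s

lemma gaussPi_second_moment (d : ℕ) (m : EuclideanSpace ℝ (Fin d)) (v : ℝ) (hv : 0 < v) (i : Fin d) :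
    Integrable (fun x : EuclideanSpace ℝ (Fin d) => (x i - m i) ^ 2) (gaussPi d m v) ∧
    ∫ x, (x i - m i) ^ 2 ∂(gaussPi d m v) = v := by
  have he : ⇑(EuclideanSpace.equiv (Fin d) ℝ).symm = ⇑(MeasurableEquiv.toLp 2 (Fin d → ℝ)) := rfl
  have h1 : Integrable (fun y : ℝ => (y - m i) ^ 2) (gaussianReal (m i) v.toNNReal) := by
    have := ((memLp_id_gaussianReal (μ := m i) (v := v.toNNReal) 2).sub (memLp_const (m i)))
    exact this.integrable_sq
  have h2 : ∫ y, (y - m i) ^ 2 ∂(gaussianReal (m i) v.toNNReal) = v := by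
    have := variance_fun_id_gaussianReal (μ := m i) (v := v.toNNReal)
    rw [variance_eq_integral (by fun_prop)] at this
    simpa [hv.le] using this
  unfold gaussPi
  rw [he]
  constructor
  · rw [MeasureTheory.integrable_map_equiv]
    exact integrable_comp_eval (μ := fun i => gaussianReal (m i) v.toNNReal) (i := i) h1
  · rw [MeasureTheory.integral_map_equiv]
    exact (integral_comp_eval (μ := fun i => gaussianReal (m i) v.toNNReal) (i := i)
      h1.aestronglyMeasurable).trans h2

lemma dens_pos {d : ℕ} (m : EuclideanSpace ℝ (Fin d)) (v : ℝ) (hv : 0 < v) (x : EuclideanSpace ℝ (Fin d)) :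
    0 < dens m v x :=
  Finset.prod_pos fun i _ => gaussianPDFReal_pos _ _ _ (by simpa using hv)

lemma dens_eq {d : ℕ} (m : EuclideanSpace ℝ (Fin d)) (v : ℝ) (hv : 0 < v) :
    ∃ C : ℝ, dens m v = fun x : EuclideanSpace ℝ (Fin d) => C * Real.exp (∑ i, (-(x i - m i) ^ 2 / (2 * v))) := by
  refine ⟨∏ i : Fin d, (√(2 * π * v))⁻¹, ?_⟩
  ext x
  simp only [dens, gaussianPDFReal, Finset.prod_mul_distrib, Real.exp_sum, Real.coe_toNNReal _ hv.le]

lemma dens_contDiff {d : ℕ} (m : EuclideanSpace ℝ (Fin d)) (v : ℝ) (hv : 0 < v) :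
    ContDiff ℝ 1 (dens m v) := by
  obtain ⟨C, hC⟩ := dens_eq m v hv
  rw [hC]
  fun_prop

lemma dens_fderiv {d : ℕ} (m : EuclideanSpace ℝ (Fin d)) (v : ℝ) (hv : 0 < v)
    (x : EuclideanSpace ℝ (Fin d)) (j : Fin d) :
    fderiv ℝ (dens m v) x (EuclideanSpace.single j 1) = - ((x j - m j) / v) * dens m v x := by
  obtain ⟨C, hC⟩ := dens_eq m v hv
  rw [hC]
  have hc : ∀ i : Fin d, HasFDerivAt (fun x : EuclideanSpace ℝ (Fin d) => -(x i - m i) ^ 2 / (2 * v))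
      ((-(x i - m i) / v) • (EuclideanSpace.proj i : EuclideanSpace ℝ (Fin d) →L[ℝ] ℝ)) x := by
    intro i
    have h0 : HasFDerivAt (fun x : EuclideanSpace ℝ (Fin d) => x i)
        (EuclideanSpace.proj i : EuclideanSpace ℝ (Fin d) →L[ℝ] ℝ) x :=
      (EuclideanSpace.proj i : EuclideanSpace ℝ (Fin d) →L[ℝ] ℝ).hasFDerivAt
    have h1 : HasDerivAt (fun t : ℝ => -(t - m i) ^ 2 / (2 * v)) (-(x i - m i) / v) (x i) := by
      have := ((((hasDerivAt_id (x i)).sub_const (m i)).pow 2).neg.div_const (2 * v))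
      refine HasDerivAt.congr_deriv this ?_
      simp only [id]
      norm_num
      ring
    exact h1.comp_hasFDerivAt x h0
  have hs := (HasFDerivAt.fun_sum (u := Finset.univ) fun i _ => hc i).exp.const_mul C
  rw [hs.fderiv]
  simp
  ring

lemma integral_fderiv_zero {d : ℕ} (u : EuclideanSpace ℝ (Fin d) → ℝ) (hu : ContDiff ℝ 1 u)
    (hc : HasCompactSupport u) (w : EuclideanSpace ℝ (Fin d)) :
    Integrable (fun x => fderiv ℝ u x w) ∧ ∫ x, fderiv ℝ u x w = 0 := by
  have hi : Integrable (fun x => fderiv ℝ u x w) := by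
    apply Continuous.integrable_of_hasCompactSupport
    · exact (hu.continuous_fderiv one_ne_zero).clm_apply continuous_const
    · exact hc.fderiv_apply (𝕜 := ℝ) w
  refine ⟨hi, ?_⟩
  have := integral_mul_fderiv_eq_neg_fderiv_mul_of_integrable (μ := (volume : Measure (EuclideanSpace ℝ (Fin d))))
    (f := fun _ => (1:ℝ)) (g := u) (v := w) (by simp) (by simpa using hi)
    (by simpa using hu.continuous.integrable_of_hasCompactSupport hc)
    (fun x _ => by fun_prop) (fun x _ => hu.differentiable one_ne_zero x)
  simpa using this

lemma gaussPi_integrable_iff {d : ℕ} (m : EuclideanSpace ℝ (Fin d)) (v : ℝ) (hv : 0 < v)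
    (F : EuclideanSpace ℝ (Fin d) → ℝ) :
    Integrable F (gaussPi d m v) ↔ Integrable (fun x => dens m v x * F x) := by
  rw [gaussPi_density d m v hv, integrable_withDensity_iff_integrable_smul' ]
  · simp [ENNReal.toReal_ofReal (dens_pos m v hv _).le]
  · exact (dens_contDiff m v hv).continuous.measurable.ennreal_ofReal
  · simp

lemma gaussPi_integral {d : ℕ} (m : EuclideanSpace ℝ (Fin d)) (v : ℝ) (hv : 0 < v)
    (F : EuclideanSpace ℝ (Fin d) → ℝ) :
    ∫ x, F x ∂(gaussPi d m v) = ∫ x, dens m v x * F x := by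
  rw [gaussPi_density d m v hv, integral_withDensity_eq_integral_toReal_smul]
  · simp [ENNReal.toReal_ofReal (dens_pos m v hv _).le]
  · exact (dens_contDiff m v hv).continuous.measurable.ennreal_ofReal
  · simp

lemma stein_compact {d : ℕ} (m : EuclideanSpace ℝ (Fin d)) (v : ℝ) (hv : 0 < v)
    (G : Fin d → EuclideanSpace ℝ (Fin d) → ℝ) (hG : ∀ i, ContDiff ℝ 1 (G i))
    (χ : EuclideanSpace ℝ (Fin d) → ℝ) (hχ : ContDiff ℝ 1 χ) (hc : HasCompactSupport χ) :
    ∫ x, (∑ i, fderiv ℝ χ x (EuclideanSpace.single i 1) * G i x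
      + χ x * (∑ i, fderiv ℝ (G i) x (EuclideanSpace.single i 1))
      - χ x * ((∑ i, (x i - m i) * G i x) / v)) ∂(gaussPi d m v) = 0 := by
  rw [gaussPi_integral m v hv]
  have key : ∀ i, Integrable (fun x => fderiv ℝ (fun y => χ y * (G i y * dens m v y)) x (EuclideanSpace.single i 1))
     ∧ ∫ x, fderiv ℝ (fun y => χ y * (G i y * dens m v y)) x (EuclideanSpace.single i 1) = 0 := by
    intro i
    apply integral_fderiv_zero
    · exact hχ.mul ((hG i).mul (dens_contDiff m v hv))
    · exact hc.mul_right
  have h := integral_finsetSum Finset.univ (fun i _ => (key i).1)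
  simp only [(key _).2, Finset.sum_const_zero] at h
  rw [← h]
  congr 1
  ext x
  have e : ∀ i, fderiv ℝ (fun y => χ y * (G i y * dens m v y)) x (EuclideanSpace.single i 1)
     = dens m v x * (fderiv ℝ χ x (EuclideanSpace.single i 1) * G i x
      + χ x * fderiv ℝ (G i) x (EuclideanSpace.single i 1) - χ x * (((x i - m i) * G i x) / v)) := by
    intro i
    have h1 := (hχ.differentiable one_ne_zero x).hasFDerivAt
    have h2 := ((hG i).differentiable one_ne_zero x).hasFDerivAt
    have h3 := ((dens_contDiff m v hv).differentiable one_ne_zero x).hasFDerivAt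
    rw [(h1.fun_mul (h2.fun_mul h3)).fderiv]
    simp [dens_fderiv m v hv]
    ring
  simp only [e, ← Finset.mul_sum, Finset.sum_add_distrib, Finset.sum_sub_distrib, Finset.sum_div]

lemma stein_identity {d : ℕ} (m : EuclideanSpace ℝ (Fin d)) (v : ℝ) (hv : 0 < v)
    (G : Fin d → EuclideanSpace ℝ (Fin d) → ℝ) (hG : ∀ i, ContDiff ℝ 1 (G i))
    (hi1 : ∀ i, Integrable (G i) (gaussPi d m v))
    (hi2 : Integrable (fun x => ∑ i, fderiv ℝ (G i) x (EuclideanSpace.single i 1)) (gaussPi d m v))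
    (hi3 : Integrable (fun x => ∑ i, (x i - m i) * G i x) (gaussPi d m v)) :
    ∫ x, ∑ i, (x i - m i) * G i x ∂(gaussPi d m v)
      = v * ∫ x, ∑ i, fderiv ℝ (G i) x (EuclideanSpace.single i 1) ∂(gaussPi d m v) := by
  let η : ContDiffBump (0 : EuclideanSpace ℝ (Fin d)) := ⟨1, 2, one_pos, one_lt_two⟩
  have hη : ContDiff ℝ 1 η := η.contDiff
  have hηc : HasCompactSupport η := η.hasCompactSupport
  obtain ⟨C, hC⟩ := (hηc.fderiv (𝕜 := ℝ)).exists_bound_of_continuous (hη.continuous_fderiv one_ne_zero)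
  have hC0 : 0 ≤ C := (norm_nonneg _).trans (hC 0)
  let c : ℕ → ℝ := fun n => ((n : ℝ) + 1)⁻¹
  have hc0 : ∀ n, 0 < c n := fun n => by positivity
  have hc1 : ∀ n, c n ≤ 1 := fun n => inv_le_one_of_one_le₀ (by simp)
  have hct : Tendsto c atTop (nhds 0) := by
    simpa [c] using tendsto_one_div_add_atTop_nhds_zero_nat (𝕜 := ℝ)
  let χ : ℕ → EuclideanSpace ℝ (Fin d) → ℝ := fun n x => η (c n • x)
  have hχ : ∀ n, ContDiff ℝ 1 (χ n) := fun n => hη.comp (contDiff_const_smul _)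
  have hχc : ∀ n, HasCompactSupport (χ n) := fun n => hηc.comp_smul (hc0 n).ne'
  have hχf : ∀ n x w, fderiv ℝ (χ n) x w = c n * fderiv ℝ η (c n • x) w := by
    intro n x w
    have h1 := (hη.differentiable one_ne_zero (c n • x)).hasFDerivAt
    have h2 : HasFDerivAt (fun x : EuclideanSpace ℝ (Fin d) => c n • x) (c n • ContinuousLinearMap.id ℝ _) x :=
      (hasFDerivAt_id x).const_smul (c n)
    have h3 : HasFDerivAt (χ n) _ x := h1.comp x h2
    rw [h3.fderiv]
    simp
  have hb : ∀ n x i, |fderiv ℝ (χ n) x (EuclideanSpace.single i 1)| ≤ c n * C := by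
    intro n x i
    rw [hχf, abs_mul, abs_of_pos (hc0 n)]
    gcongr
    have := (fderiv ℝ η (c n • x)).le_opNorm (EuclideanSpace.single i 1)
    simp only [PiLp.norm_single, norm_one, mul_one, Real.norm_eq_abs] at this
    exact this.trans (hC _)
  have hχ1 : ∀ n x, |χ n x| ≤ 1 := fun n x => by
    rw [abs_of_nonneg η.nonneg]; exact η.le_one
  have hlim := tendsto_integral_of_dominated_convergence (μ := gaussPi d m v)
    (F := fun n x => (∑ i, fderiv ℝ (χ n) x (EuclideanSpace.single i 1) * G i x
      + χ n x * (∑ i, fderiv ℝ (G i) x (EuclideanSpace.single i 1))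
      - χ n x * ((∑ i, (x i - m i) * G i x) / v)))
    (f := fun x => (∑ i, fderiv ℝ (G i) x (EuclideanSpace.single i 1))
      - ((∑ i, (x i - m i) * G i x) / v))
    (fun x => (∑ i, C * |G i x|) + |∑ i, fderiv ℝ (G i) x (EuclideanSpace.single i 1)|
      + |(∑ i, (x i - m i) * G i x) / v|) ?_ ?_ ?_ ?_
  · simp only [stein_compact m v hv G hG _ (hχ _) (hχc _)] at hlim
    have h0 := tendsto_nhds_unique hlim tendsto_const_nhds
    rw [integral_sub hi2 (hi3.div_const v), integral_div] at h0
    field_simp at h0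
    linarith
  · intro n
    apply Continuous.aestronglyMeasurable
    have a1 := (hχ n).continuous
    have a2 := fun i => (hG i).continuous
    have a3 : ∀ i : Fin d, Continuous fun x => fderiv ℝ (χ n) x (EuclideanSpace.single i 1) :=
      fun i => ((hχ n).continuous_fderiv one_ne_zero).clm_apply continuous_const
    have a4 : ∀ i : Fin d, Continuous fun x => fderiv ℝ (G i) x (EuclideanSpace.single i 1) :=
      fun i => ((hG i).continuous_fderiv one_ne_zero).clm_apply continuous_const
    fun_prop
  · exact ((integrable_finsetSum _ fun i _ => (hi1 i).abs.const_mul C).add hi2.abs).add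
      (hi3.div_const v).abs
  · intro n
    refine ae_of_all _ fun x => ?_
    rw [Real.norm_eq_abs]
    refine (abs_sub _ _).trans (add_le_add ((abs_add_le _ _).trans (add_le_add ?_ ?_)) ?_)
    · refine (Finset.abs_sum_le_sum_abs _ _).trans (Finset.sum_le_sum fun i _ => ?_)
      rw [abs_mul]
      gcongr
      exact (hb n x i).trans (mul_le_of_le_one_left hC0 (hc1 n))
    · rw [abs_mul]; exact mul_le_of_le_one_left (abs_nonneg _) (hχ1 n x)
    · rw [abs_mul]; exact mul_le_of_le_one_left (abs_nonneg _) (hχ1 n x)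
  · refine ae_of_all _ fun x => ?_
    have t1 : Tendsto (fun n => χ n x) atTop (nhds 1) := by
      have h : Tendsto (fun n => c n • x) atTop (nhds 0) := by
        simpa using hct.smul_const x
      have h' := (η.continuous.tendsto 0).comp h
      rwa [η.one_of_mem_closedBall (by simp [η])] at h'
    have t2 : ∀ i, Tendsto (fun n => fderiv ℝ (χ n) x (EuclideanSpace.single i 1)) atTop (nhds 0) := by
      intro i
      refine squeeze_zero_norm (a := fun n => c n * C) (fun n => hb n x i) ?_
      simpa using hct.mul_const C
    have t3 := ((tendsto_finsetSum Finset.univ fun i _ => (t2 i).mul_const (G i x)).add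
      (t1.mul_const (∑ i, fderiv ℝ (G i) x (EuclideanSpace.single i 1)))).sub
      (t1.mul_const ((∑ i, (x i - m i) * G i x) / v))
    simpa using t3

lemma lap_log {d : ℕ} (f : EuclideanSpace ℝ (Fin d) → ℝ)
    (hf : ContDiff ℝ 2 f) (hfpos : ∀ x, 0 < f x) (x : EuclideanSpace ℝ (Fin d)) :
    ∑ i, fderiv ℝ (fun y => fderiv ℝ (fun y => Real.log (f y)) y (EuclideanSpace.single i 1)) x
      (EuclideanSpace.single i 1) =
    2 * (lap (fun y => Real.sqrt (f y)) x / Real.sqrt (f x))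
     - (1 / 2) * ∑ i, (fderiv ℝ (fun y => Real.log (f y)) x (EuclideanSpace.single i 1)) ^ 2 := by
  have hh : ContDiff ℝ 2 (fun y => √(f y)) := hf.sqrt fun x => (hfpos x).ne'
  have hp : ∀ x, 0 < √(f x) := fun x => Real.sqrt_pos.2 (hfpos x)
  unfold lap
  generalize hH : (fun y => √(f y)) = h at hh
  have hH' : ∀ y, √(f y) = h y := fun y => congrFun hH y
  simp only [hH'] at hp ⊢
  have e0 : (fun y => Real.log (f y)) = fun y => 2 * Real.log (h y) := by
    ext y
    rw [← hH', Real.log_sqrt (hfpos y).le]; ring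
  have e1 : ∀ y w, fderiv ℝ (fun y => Real.log (f y)) y w = 2 * (fderiv ℝ h y w / h y) := by
    intro y w
    rw [e0]
    have := ((hh.differentiable two_ne_zero y).hasFDerivAt.log (hp y).ne').const_mul 2
    rw [this.fderiv]
    simp; ring
  simp only [e1]
  rw [Finset.sum_div, Finset.mul_sum, Finset.mul_sum, ← Finset.sum_sub_distrib]
  refine Finset.sum_congr rfl fun i _ => ?_
  have d1 : ContDiff ℝ 1 (fun y => fderiv ℝ h y (EuclideanSpace.single i 1)) :=
    (hh.fderiv_right (m := 1) (by norm_num)).clm_apply contDiff_const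
  have d2 := (d1.differentiable one_ne_zero x).hasFDerivAt
  have d3 := (hh.differentiable two_ne_zero x).hasFDerivAt
  have d4 := (d2.fun_mul ((hasDerivAt_inv (hp x).ne').comp_hasFDerivAt x d3)).const_mul 2
  simp only [div_eq_mul_inv] at d4 ⊢
  have d5 : HasFDerivAt (fun y => 2 * ((fderiv ℝ h y) (EuclideanSpace.single i 1) * (h y)⁻¹)) _ x := d4
  rw [d5.fderiv]
  have := (hp x).ne'
  simp
  field_simp
  ring

/-- Superefficiency of Stein-type estimators: if `d ≥ 3`, `f > 0` is `C²` with the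
needed integrability, `Δ√f ≤ 0` a.e. and `Δ√f < 0` on a set of positive Lebesgue
measure, then `E[‖X + σ²∇log f(X) − μ‖²] < σ²d`. -/
theorem stein_superefficient
    (d : ℕ) (hd : 3 ≤ d) (m : EuclideanSpace ℝ (Fin d)) (σ : ℝ) (hσ : 0 < σ)
    (f : EuclideanSpace ℝ (Fin d) → ℝ)
    (hf : ContDiff ℝ 2 f) (hfpos : ∀ x, 0 < f x)
    (hint1 : Integrable
      (fun x => ‖x + σ ^ 2 • gradient (fun y => Real.log (f y)) x - m‖ ^ 2)
      (gaussPi d m (σ ^ 2)))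
    (hint2 : Integrable
      (fun x => ‖gradient (fun y => Real.log (f y)) x‖ ^ 2) (gaussPi d m (σ ^ 2)))
    (hint3 : Integrable
      (fun x => lap (fun y => Real.sqrt (f y)) x / Real.sqrt (f x))
      (gaussPi d m (σ ^ 2)))
    (hsh : ∀ᵐ x ∂(volume : Measure (EuclideanSpace ℝ (Fin d))),
      lap (fun y => Real.sqrt (f y)) x ≤ 0)
    (hneg : 0 < volume {x : EuclideanSpace ℝ (Fin d) |
      lap (fun y => Real.sqrt (f y)) x < 0}) :
    ∫ x, ‖x + σ ^ 2 • gradient (fun y => Real.log (f y)) x - m‖ ^ 2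
        ∂(gaussPi d m (σ ^ 2)) < σ ^ 2 * d := by
  set γ := gaussPi d m (σ ^ 2) with hγ
  have hv : 0 < σ ^ 2 := by positivity
  set F : EuclideanSpace ℝ (Fin d) → ℝ := fun y => Real.log (f y) with hF
  have hFc : ContDiff ℝ 2 F := hf.log fun x => (hfpos x).ne'
  let G : Fin d → EuclideanSpace ℝ (Fin d) → ℝ := fun i x => fderiv ℝ F x (EuclideanSpace.single i 1)
  have hG : ∀ i, ContDiff ℝ 1 (G i) := fun i =>
    (hFc.fderiv_right (m := 1) (by norm_num)).clm_apply contDiff_const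
  have hgr : ∀ x i, (gradient F x) i = G i x := by
    intro x i
    have : inner ℝ (gradient F x) (EuclideanSpace.single i (1 : ℝ)) = G i x := by
      simp [gradient, G]
    rw [← this, EuclideanSpace.inner_single_right]
    simp
  have hn2 : ∀ x, ‖gradient F x‖ ^ 2 = ∑ i, (G i x) ^ 2 := by
    intro x
    rw [EuclideanSpace.real_norm_sq_eq]
    simp only [hgr]
  have hfin : IsProbabilityMeasure γ := by
    rw [hγ]
    unfold gaussPi
    exact Measure.isProbabilityMeasure_map (by fun_prop)
  have hGsq : ∀ i, Integrable (fun x => (G i x) ^ 2) γ := by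
    intro i
    refine hint2.mono' ((hG i).continuous.pow 2).aestronglyMeasurable (ae_of_all _ fun x => ?_)
    rw [hn2, Real.norm_eq_abs, abs_of_nonneg (sq_nonneg _)]
    exact Finset.single_le_sum (f := fun i => (G i x) ^ 2) (fun j _ => sq_nonneg _) (Finset.mem_univ i)
  have hGL : ∀ i, MemLp (G i) 2 γ := fun i =>
    (memLp_two_iff_integrable_sq (hG i).continuous.aestronglyMeasurable).2 (hGsq i)
  have hXL : ∀ i : Fin d, MemLp (fun x : EuclideanSpace ℝ (Fin d) => x i - m i) 2 γ := fun i =>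
    (memLp_two_iff_integrable_sq (by
      apply Continuous.aestronglyMeasurable; fun_prop)).2 (gaussPi_second_moment d m _ hv i).1
  have hG1 : ∀ i, Integrable (G i) γ := fun i => (hGL i).integrable (by norm_num)
  have hXG : Integrable (fun x => ∑ i, (x i - m i) * G i x) γ :=
    integrable_finsetSum _ fun i _ => (hXL i).integrable_mul (hGL i)
  have hlap : ∀ x, ∑ i, fderiv ℝ (G i) x (EuclideanSpace.single i 1) =
      2 * (lap (fun y => Real.sqrt (f y)) x / Real.sqrt (f x)) - (1 / 2) * ‖gradient F x‖ ^ 2 := by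
    intro x
    rw [hn2]
    exact lap_log f hf hfpos x
  have hdiv : Integrable (fun x => ∑ i, fderiv ℝ (G i) x (EuclideanSpace.single i 1)) γ := by
    simp only [hlap]
    exact (hint3.const_mul 2).sub (hint2.const_mul (1 / 2))
  have hst := stein_identity m (σ ^ 2) hv G hG hG1 hdiv hXG
  rw [← hγ] at hst
  have hX2 : Integrable (fun x : EuclideanSpace ℝ (Fin d) => ∑ i, (x i - m i) ^ 2) γ :=
    integrable_finsetSum _ fun i _ => (gaussPi_second_moment d m _ hv i).1
  have hX2i : ∫ x : EuclideanSpace ℝ (Fin d), ∑ i, (x i - m i) ^ 2 ∂γ = σ ^ 2 * d := by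
    rw [integral_finsetSum _ fun i _ => (gaussPi_second_moment d m _ hv i).1]
    simp only [hγ, (gaussPi_second_moment d m _ hv _).2]
    simp [mul_comm]
  have hexp : ∀ x, ‖x + σ ^ 2 • gradient F x - m‖ ^ 2 =
      (∑ i, (x i - m i) ^ 2 + 2 * σ ^ 2 * ∑ i, (x i - m i) * G i x) + σ ^ 4 * ‖gradient F x‖ ^ 2 := by
    intro x
    rw [EuclideanSpace.real_norm_sq_eq, hn2, Finset.mul_sum, Finset.mul_sum,
      ← Finset.sum_add_distrib, ← Finset.sum_add_distrib]
    refine Finset.sum_congr rfl fun i _ => ?_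
    simp only [PiLp.sub_apply, PiLp.add_apply, PiLp.smul_apply, hgr, smul_eq_mul]
    ring
  set L : EuclideanSpace ℝ (Fin d) → ℝ := fun x => lap (fun y => Real.sqrt (f y)) x / Real.sqrt (f x) with hL
  have hLneg : ∫ x, L x ∂γ < 0 := by
    have hac : γ ≪ volume := by
      rw [hγ, gaussPi_density d m _ hv]; exact withDensity_absolutelyContinuous _ _
    have hac' : (volume : Measure (EuclideanSpace ℝ (Fin d))) ≪ γ := by
      rw [hγ, gaussPi_density d m _ hv]
      refine withDensity_absolutelyContinuous' ?_ (ae_of_all _ fun x => ?_)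
      · exact (dens_contDiff m _ hv).continuous.measurable.ennreal_ofReal.aemeasurable
      · simpa using dens_pos m _ hv x
    have hle : 0 ≤ᵐ[γ] fun x => - L x := by
      filter_upwards [hac.ae_le hsh] with x hx
      exact neg_nonneg.2 (div_nonpos_of_nonpos_of_nonneg hx (Real.sqrt_nonneg _))
    have hpos : 0 < ∫ x, - L x ∂γ := by
      rw [integral_pos_iff_support_of_nonneg_ae hle hint3.neg]
      refine pos_iff_ne_zero.2 fun h0 => ?_
      have h1 := hac' h0
      refine hneg.ne' (measure_mono_null ?_ h1)
      intro x hx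
      have : L x < 0 := div_neg_of_neg_of_pos hx (Real.sqrt_pos.2 (hfpos x))
      simpa using this.ne
    rw [integral_neg] at hpos
    linarith
  have hdi : ∫ x, ∑ i, fderiv ℝ (G i) x (EuclideanSpace.single i 1) ∂γ
      = 2 * ∫ x, L x ∂γ - (1 / 2) * ∫ x, ‖gradient F x‖ ^ 2 ∂γ := by
    simp only [hlap]
    rw [integral_sub (hint3.const_mul 2) (hint2.const_mul (1 / 2)), integral_const_mul,
      integral_const_mul]
  simp only [hexp]
  have hA : Integrable (fun x : EuclideanSpace ℝ (Fin d) => ∑ i, (x i - m i) ^ 2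
      + 2 * σ ^ 2 * ∑ i, (x i - m i) * G i x) γ := hX2.add (hXG.const_mul _)
  rw [integral_add hA (hint2.const_mul _),
    integral_add hX2 (hXG.const_mul _), integral_const_mul, integral_const_mul, hX2i, hst, hdi]
  have : 0 < σ ^ 4 := by positivity
  nlinarith [mul_neg_of_pos_of_neg this hLneg]
end

section
/- Let X ∼ N(μ, σ²I_d) with d ≥ 3 and fix v ∈ ℝ^d. Then the James–Stein type estimator X − (d−2)σ²(X − v)/‖X − v‖² satisfies E_μ[‖X − (d−2)σ²(X−v)/‖X−v‖² − μ‖²] = σ²d − (d−2)²σ⁴ E_μ[ 1/‖X − v‖² ] < σ²d. -/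
open MeasureTheory ProbabilityTheory Real Filter

lemma js_pdf_deriv (μ : ℝ) (V : NNReal) (hV : V ≠ 0) (t : ℝ) :
    HasDerivAt (gaussianPDFReal μ V) (-((t - μ) / V) * gaussianPDFReal μ V t) t := by
  have hV' : (V : ℝ) ≠ 0 := by exact_mod_cast hV
  rw [gaussianPDFReal_def]
  have h : HasDerivAt (fun x : ℝ => -(x - μ) ^ 2 / (2 * V)) (-((t - μ) / V)) t := by
    have := ((((hasDerivAt_id t).sub_const μ).pow 2).neg).div_const (2 * (V : ℝ))
    convert! this using 1
    simp; field_simp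
  convert! (h.exp).const_mul (√(2 * π * V))⁻¹ using 1
  ring

lemma js_int_iff (μ : ℝ) (V : NNReal) (hV : V ≠ 0) (f : ℝ → ℝ)
    (h : Integrable f (gaussianReal μ V)) : Integrable (fun t => gaussianPDFReal μ V t * f t) := by
  rw [gaussianReal_of_var_ne_zero μ hV, integrable_withDensity_iff_integrable_smul'
    (measurable_gaussianPDF _ _) (ae_of_all _ fun _ ↦ gaussianPDF_lt_top)] at h
  simpa [toReal_gaussianPDF] using h

lemma js_stein1 (μ : ℝ) (V : NNReal) (hV : V ≠ 0) (g g' : ℝ → ℝ)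
    (hg : ∀ t, HasDerivAt g (g' t) t) (h1 : Integrable g (gaussianReal μ V))
    (h2 : Integrable g' (gaussianReal μ V))
    (h3 : Integrable (fun t => (t - μ) * g t) (gaussianReal μ V)) :
    ∫ t, (t - μ) * g t ∂gaussianReal μ V = V * ∫ t, g' t ∂gaussianReal μ V := by
  have hV' : (V : ℝ) ≠ 0 := by exact_mod_cast hV
  have := integral_mul_deriv_eq_deriv_mul_of_integrable (u := g) (u' := g')
    (v := gaussianPDFReal μ V) (v' := fun t => -((t - μ) / V) * gaussianPDFReal μ V t)
    (fun t _ => hg t) (fun t _ => js_pdf_deriv μ V hV t)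
    (by
      convert! (js_int_iff μ V hV _ h3).const_mul (-(V : ℝ)⁻¹) using 1
      ext t; simp; ring)
    (by
      convert! (js_int_iff μ V hV _ h2) using 1
      ext t; simp; ring)
    (by
      convert! (js_int_iff μ V hV _ h1) using 1
      ext t; simp; ring)
  rw [integral_gaussianReal_eq_integral_smul hV, integral_gaussianReal_eq_integral_smul hV]
  have e1 : ∀ t, g t * (-((t - μ) / V) * gaussianPDFReal μ V t) =
    (-(V : ℝ)⁻¹) * (gaussianPDFReal μ V t • ((t - μ) * g t)) := by
    intro t; simp; ring
  have e2 : ∀ t, g' t * gaussianPDFReal μ V t = gaussianPDFReal μ V t • g' t := by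
    intro t; simp; ring
  simp_rw [e1, e2, integral_const_mul] at this
  field_simp at this
  linarith

/-- bounds -/
lemma js_bd1 (u c : ℝ) (hc : 0 < c) (Q : ℝ) (hQ : u ^ 2 + c ≤ Q) : |u / Q| ≤ 1 + 1 / c := by
  have hQ0 : 0 < Q := by nlinarith [sq_nonneg u]
  rw [abs_div, abs_of_pos hQ0, div_le_iff₀ hQ0]
  have : (1 + 1 / c) * (u ^ 2 + c) ≤ (1 + 1 / c) * Q := by gcongr
  have h2 : (1 + 1 / c) * (u ^ 2 + c) = u ^ 2 + c + u ^ 2 / c + 1 := by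
    field_simp; ring
  have : 0 ≤ u ^ 2 / c := by positivity
  have : |u| ≤ u ^ 2 + 1 := by rw [← sq_abs u]; nlinarith [sq_nonneg (|u| - 1), abs_nonneg u]
  linarith

lemma js_bd2 (u c : ℝ) (hc : 0 < c) (Q : ℝ) (hQ : u ^ 2 + c ≤ Q) :
    |1 / Q - 2 * u ^ 2 / Q ^ 2| ≤ 3 / c := by
  have hQ0 : 0 < Q := by nlinarith [sq_nonneg u]
  have hu : u ^ 2 / Q ≤ 1 := by rw [div_le_one hQ0]; linarith
  have hu0 : 0 ≤ u ^ 2 / Q := by positivity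
  have e : 1 / Q - 2 * u ^ 2 / Q ^ 2 = (1 - 2 * (u ^ 2 / Q)) * (1 / Q) := by field_simp
  rw [e, abs_mul, abs_of_pos (by positivity : 0 < 1 / Q)]
  have h1 : |1 - 2 * (u ^ 2 / Q)| ≤ 3 := by rw [abs_le]; constructor <;> linarith
  have h2 : 1 / Q ≤ 1 / c := by apply one_div_le_one_div_of_le hc; nlinarith [sq_nonneg u]
  calc _ ≤ 3 * (1 / c) := by gcongr
    _ = _ := by ring

lemma js_stein1' (μ : ℝ) (V : NNReal) (hV : V ≠ 0) (a c : ℝ) (hc : 0 < c) :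
    ∫ t, (t - μ) * ((t - a) / ((t - a) ^ 2 + c)) ∂gaussianReal μ V =
      V * ∫ t, (1 / ((t - a) ^ 2 + c) - 2 * (t - a) ^ 2 / ((t - a) ^ 2 + c) ^ 2)
        ∂gaussianReal μ V := by
  have hb : Integrable (fun t => (t - a) / ((t - a) ^ 2 + c)) (gaussianReal μ V) :=
    Integrable.of_bound (Measurable.aestronglyMeasurable (by fun_prop)) (1 + 1 / c)
      (ae_of_all _ fun t => js_bd1 _ c hc _ le_rfl)
  apply js_stein1 μ V hV _ _ _ hb
  · exact Integrable.of_bound (Measurable.aestronglyMeasurable (by fun_prop)) (3 / c)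
      (ae_of_all _ fun t => js_bd2 _ c hc _ le_rfl)
  · refine Integrable.mul_bdd (c := 1 + 1 / c) ?_ hb.1
      (ae_of_all _ fun t => js_bd1 _ c hc _ le_rfl)
    exact ((memLp_id_gaussianReal' 1 (by simp)).integrable le_rfl).sub (integrable_const _)
  · intro t
    have hQ : (t - a) ^ 2 + c ≠ 0 := by positivity
    have h0 : HasDerivAt (fun t : ℝ => t - a) 1 t := (hasDerivAt_id t).sub_const a
    convert! h0.div ((h0.pow 2).add_const c) hQ using 1
    simp; field_simp

section
variable {d : ℕ} (m v : Fin d → ℝ) (V : NNReal)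

noncomputable def jsP : Measure (Fin d → ℝ) := Measure.pi fun i => gaussianReal (m i) V

instance : IsProbabilityMeasure (jsP m V) := by unfold jsP; infer_instance

def jsS (x : Fin d → ℝ) : ℝ := ∑ i, (x i - v i) ^ 2

lemma jsS_nonneg (x : Fin d → ℝ) : 0 ≤ jsS v x := Finset.sum_nonneg fun _ _ => sq_nonneg _

lemma jsS_le (x : Fin d → ℝ) (i : Fin d) : (x i - v i) ^ 2 ≤ jsS v x :=
  Finset.single_le_sum (f := fun i => (x i - v i) ^ 2) (fun _ _ => sq_nonneg _) (Finset.mem_univ i)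

@[fun_prop]
lemma jsS_meas : Measurable (jsS v) := by unfold jsS; fun_prop

lemma js_coord_int (i : Fin d) : Integrable (fun x => x i - m i) (jsP m V) :=
  integrable_comp_eval (μ := fun i => gaussianReal (m i) V) (i := i) (f := fun t => t - m i)
    (((memLp_id_gaussianReal' 1 (by simp)).integrable le_rfl).sub (integrable_const _))

lemma js_coord_sq_int (i : Fin d) : Integrable (fun x => (x i - m i) ^ 2) (jsP m V) :=
  integrable_comp_eval (μ := fun i => gaussianReal (m i) V) (i := i) (f := fun t => (t - m i) ^ 2)
    (((memLp_id_gaussianReal' 2 (by simp)).sub (memLp_const _)).integrable_sq)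

lemma js_coord_sq (i : Fin d) : ∫ x, (x i - m i) ^ 2 ∂(jsP m V) = V := by
  have h := integral_comp_eval (μ := fun i => gaussianReal (m i) V) (i := i)
    (f := fun t => (t - m i) ^ 2) (Measurable.aestronglyMeasurable (by fun_prop))
  refine h.trans ?_
  rw [← variance_id_gaussianReal (μ := m i) (v := V), variance_eq_integral (by fun_prop)]
  simp

lemma js_A_int (ε : ℝ) (hε : 0 < ε) (i : Fin d) :
    Integrable (fun x => (x i - m i) * ((x i - v i) / (jsS v x + ε))) (jsP m V) :=
  Integrable.mul_bdd (c := 1 + 1 / ε) (js_coord_int m V i)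
    (Measurable.aestronglyMeasurable (by fun_prop))
    (ae_of_all _ fun x => js_bd1 _ ε hε _ (by have := jsS_le v x i; linarith))

lemma js_B_int (ε : ℝ) (hε : 0 < ε) (i : Fin d) :
    Integrable (fun x => 1 / (jsS v x + ε) - 2 * (x i - v i) ^ 2 / (jsS v x + ε) ^ 2)
      (jsP m V) :=
  Integrable.of_bound (Measurable.aestronglyMeasurable (by fun_prop)) (3 / ε)
    (ae_of_all _ fun x => js_bd2 _ ε hε _ (by have := jsS_le v x i; linarith))

lemma js_stein_coord (hV : V ≠ 0) (ε : ℝ) (hε : 0 < ε) (i : Fin d) :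
    ∫ x, (x i - m i) * ((x i - v i) / (jsS v x + ε)) ∂(jsP m V) =
      V * ∫ x, (1 / (jsS v x + ε) - 2 * (x i - v i) ^ 2 / (jsS v x + ε) ^ 2) ∂(jsP m V) := by
  obtain _ | n := d
  · exact i.elim0
  have hA := js_A_int m v V ε hε i
  have hB := js_B_int m v V ε hε i
  have mp := (measurePreserving_piFinSuccAbove (fun i => gaussianReal (m i) V) i).symm
  have hA' := mp.integrable_comp_emb (MeasurableEquiv.measurableEmbedding _) |>.2 hA
  have hB' := mp.integrable_comp_emb (MeasurableEquiv.measurableEmbedding _) |>.2 hB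
  simp only [Function.comp_def] at hA' hB'
  unfold jsP
  rw [← mp.integral_comp', ← mp.integral_comp']
  rw [integral_prod_symm _ hA', integral_prod_symm _ hB', ← integral_const_mul]
  congr 1
  ext y
  have hc : 0 < ∑ j, (y j - v (i.succAbove j)) ^ 2 + ε := by positivity
  have := js_stein1' (m i) V hV (v i) _ hc
  simpa [MeasurableEquiv.piFinSuccAbove_symm_apply, Fin.insertNthEquiv, jsS,
    Fin.sum_univ_succAbove _ i, add_assoc] using this

def jsT (x : Fin d → ℝ) : ℝ := ∑ i, (x i - m i) ^ 2
def jsC (x : Fin d → ℝ) : ℝ := ∑ i, (x i - m i) * (x i - v i)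

@[fun_prop]
lemma jsC_meas : Measurable (jsC m v) := by unfold jsC; fun_prop

lemma jsT_int : Integrable (jsT m) (jsP m V) := by
  unfold jsT
  exact integrable_finsetSum _ fun i _ => js_coord_sq_int m V i

lemma jsT_val : ∫ x, jsT m x ∂(jsP m V) = d * V := by
  unfold jsT
  rw [integral_finsetSum _ fun i _ => js_coord_sq_int m V i]
  simp [js_coord_sq]

lemma js_r_int (ε : ℝ) (hε : 0 < ε) : Integrable (fun x => 1 / (jsS v x + ε)) (jsP m V) := by
  refine Integrable.of_bound (Measurable.aestronglyMeasurable (by fun_prop)) (1 / ε)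
    (ae_of_all _ fun x => ?_)
  have := jsS_nonneg v x
  rw [Real.norm_of_nonneg (by positivity)]
  exact one_div_le_one_div_of_le hε (by linarith)

lemma js_stein_sum (hV : V ≠ 0) (ε : ℝ) (hε : 0 < ε) :
    Integrable (fun x => jsC m v x / (jsS v x + ε)) (jsP m V) ∧
    Integrable (fun x => ((d : ℝ) - 2) / (jsS v x + ε) + 2 * ε / (jsS v x + ε) ^ 2) (jsP m V) ∧
    ∫ x, jsC m v x / (jsS v x + ε) ∂(jsP m V) =
      V * ∫ x, (((d : ℝ) - 2) / (jsS v x + ε) + 2 * ε / (jsS v x + ε) ^ 2) ∂(jsP m V) := by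
  have e1 : ∀ x, jsC m v x / (jsS v x + ε) =
      ∑ i, (x i - m i) * ((x i - v i) / (jsS v x + ε)) := by
    intro x; unfold jsC; rw [Finset.sum_div]; simp_rw [mul_div_assoc]
  have e2 : ∀ x, ((d : ℝ) - 2) / (jsS v x + ε) + 2 * ε / (jsS v x + ε) ^ 2 =
      ∑ i, (1 / (jsS v x + ε) - 2 * (x i - v i) ^ 2 / (jsS v x + ε) ^ 2) := by
    intro x
    have := jsS_nonneg v x
    have h0 : jsS v x + ε ≠ 0 := by positivity
    rw [Finset.sum_sub_distrib, ← Finset.sum_div, ← Finset.sum_div, ← Finset.mul_sum]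
    change _ = _ - 2 * jsS v x / _
    simp
    field_simp
    ring
  simp_rw [e1, e2]
  refine ⟨integrable_finsetSum _ fun i _ => js_A_int m v V ε hε i,
    integrable_finsetSum _ fun i _ => js_B_int m v V ε hε i, ?_⟩
  rw [integral_finsetSum _ fun i _ => js_A_int m v V ε hε i,
    integral_finsetSum _ fun i _ => js_B_int m v V ε hε i, Finset.mul_sum]
  exact Finset.sum_congr rfl fun i _ => js_stein_coord m v V hV ε hε i

lemma js_CS (x : Fin d → ℝ) (A r : ℝ) (hA : 0 < A) :
    |jsC m v x * r| ≤ jsT m x / (2 * A) + A * (jsS v x * r ^ 2) / 2 := by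
  unfold jsC jsT jsS
  rw [Finset.sum_mul]
  refine (Finset.abs_sum_le_sum_abs _ _).trans ?_
  rw [Finset.sum_div, Finset.sum_mul, Finset.mul_sum, Finset.sum_div, ← Finset.sum_add_distrib]
  refine Finset.sum_le_sum fun i _ => ?_
  set a := x i - m i
  set b := x i - v i
  have e : a ^ 2 / (2 * A) + A * (b ^ 2 * r ^ 2) / 2 = (a ^ 2 + (A * b * r) ^ 2) / (2 * A) := by
    field_simp
  rw [e, le_div_iff₀ (by positivity)]
  have h1 := sq_nonneg (|a| - |A * b * r|)
  have h2 : |a| * |A * b * r| = A * |a * b * r| := by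
    rw [← abs_mul, ← abs_of_pos hA, ← abs_mul, abs_of_pos hA]; ring_nf
  have h3 := sq_abs a
  have h4 := sq_abs (A * b * r)
  nlinarith

lemma js_r_bound (hd : 3 ≤ d) (hV : V ≠ 0) (ε : ℝ) (hε : 0 < ε) :
    ∫ x, 1 / (jsS v x + ε) ∂(jsP m V) ≤ d / V := by
  have hV' : 0 < (V : ℝ) := by exact_mod_cast pos_iff_ne_zero.2 hV
  have hd' : (3 : ℝ) ≤ d := by exact_mod_cast hd
  obtain ⟨i1, i2, h⟩ := js_stein_sum m v V hV ε hε
  have i3 := js_r_int m v V ε hε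
  have b1 : ∫ x, 1 / (jsS v x + ε) ∂(jsP m V) ≤
      ∫ x, (((d : ℝ) - 2) / (jsS v x + ε) + 2 * ε / (jsS v x + ε) ^ 2) ∂(jsP m V) := by
    refine integral_mono i3 i2 fun x => ?_
    have := jsS_nonneg v x
    have h1 : 1 / (jsS v x + ε) ≤ ((d : ℝ) - 2) / (jsS v x + ε) := by
      gcongr; linarith
    have h2 : 0 ≤ 2 * ε / (jsS v x + ε) ^ 2 := by positivity
    simp only; linarith
  have b2 : ∫ x, jsC m v x / (jsS v x + ε) ∂(jsP m V) ≤
      ∫ x, (jsT m x / (2 * V) + V / 2 * (1 / (jsS v x + ε))) ∂(jsP m V) := by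
    refine integral_mono i1 (((jsT_int m V).div_const _).add (i3.const_mul _)) fun x => ?_
    have h0 := jsS_nonneg v x
    have h1 := (le_abs_self _).trans (js_CS m v x V (1 / (jsS v x + ε)) hV')
    have h2 : jsS v x * (1 / (jsS v x + ε)) ^ 2 ≤ 1 / (jsS v x + ε) := by
      rw [div_pow, one_pow, mul_one_div, div_le_div_iff₀ (by positivity) (by positivity)]
      nlinarith
    have h3 := mul_le_mul_of_nonneg_left h2 hV'.le
    simp only
    rw [div_eq_mul_one_div]
    linarith
  rw [integral_add ((jsT_int m V).div_const _) (i3.const_mul _), integral_const_mul,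
    integral_div, jsT_val] at b2
  have h5 : (d : ℝ) * V / (2 * V) = d / 2 := by field_simp
  rw [le_div_iff₀ hV']
  rw [h5] at b2
  have := mul_le_mul_of_nonneg_left b1 hV'.le
  linarith

lemma js_S_pos (hd : 3 ≤ d) (hV : V ≠ 0) : ∀ᵐ x ∂(jsP m V), 0 < jsS v x := by
  have hn : Nonempty (Fin d) := ⟨⟨0, by omega⟩⟩
  have : ∀ i, NullSingletonClass (gaussianReal (m i) V) := fun i => by
    exact nullSingletonClass_gaussianReal (μ := m i) hV
  have hs : (jsP m V) {v} = 0 := by unfold jsP; exact measure_singleton _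
  have : ∀ᵐ x ∂(jsP m V), x ≠ v := by
    rw [ae_iff]; simpa using hs
  filter_upwards [this] with x hx
  refine lt_of_le_of_ne (jsS_nonneg v x) fun h => hx ?_
  ext i
  have := jsS_le v x i
  rw [← h] at this
  nlinarith [sq_nonneg (x i - v i), pow_eq_zero_iff (two_ne_zero) |>.1 (le_antisymm this (sq_nonneg _))]

lemma js_eps (n : ℕ) : (0 : ℝ) < 1 / ((n : ℝ) + 1) := by positivity

lemma js_tendsto (a : ℝ) (ha : 0 < a) :
    Tendsto (fun n : ℕ => 1 / (a + 1 / ((n : ℝ) + 1))) atTop (nhds (1 / a)) := by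
  have h := (tendsto_one_div_add_atTop_nhds_zero_nat (𝕜 := ℝ)).const_add a
  rw [add_zero] at h
  exact tendsto_const_nhds.div h ha.ne'

lemma js_inv_int (hd : 3 ≤ d) (hV : V ≠ 0) : Integrable (fun x => 1 / jsS v x) (jsP m V) := by
  refine ⟨Measurable.aestronglyMeasurable (by fun_prop), ?_⟩
  have hle : ∫⁻ x, ‖1 / jsS v x‖ₑ ∂(jsP m V) ≤ ENNReal.ofReal (d / V) := by
    calc ∫⁻ x, ‖1 / jsS v x‖ₑ ∂(jsP m V)
        = ∫⁻ x, liminf (fun n : ℕ => ‖1 / (jsS v x + 1 / ((n : ℝ) + 1))‖ₑ) atTop ∂(jsP m V) := by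
          apply lintegral_congr_ae
          filter_upwards [js_S_pos m v V hd hV] with x hx
          exact ((js_tendsto _ hx).enorm.liminf_eq).symm
      _ ≤ liminf (fun n : ℕ => ∫⁻ x, ‖1 / (jsS v x + 1 / ((n : ℝ) + 1))‖ₑ ∂(jsP m V)) atTop :=
          lintegral_liminf_le fun n => by fun_prop
      _ ≤ ENNReal.ofReal (d / V) := by
          refine liminf_le_of_frequently_le' (Frequently.of_forall fun n => ?_)
          have hp : ∀ x, 0 ≤ 1 / (jsS v x + 1 / ((n : ℝ) + 1)) := fun x => by
            have := jsS_nonneg v x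
            positivity
          have h := js_r_bound m v V hd hV _ (js_eps n)
          simp_rw [Real.enorm_of_nonneg (hp _)]
          rw [← ofReal_integral_eq_lintegral_ofReal (js_r_int m v V _ (js_eps n))
            (ae_of_all _ hp)]
          exact ENNReal.ofReal_le_ofReal h
  exact hle.trans_lt ENNReal.ofReal_lt_top

lemma js_C_bound (x : Fin d → ℝ) (hx : 0 < jsS v x) (ε : ℝ) (hε : 0 ≤ ε) :
    |jsC m v x / (jsS v x + ε)| ≤ jsT m x / 2 + (1 / jsS v x) / 2 := by
  have h := js_CS m v x 1 (1 / (jsS v x + ε)) one_pos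
  rw [mul_one_div] at h
  have h2 : jsS v x * (1 / (jsS v x + ε)) ^ 2 ≤ 1 / jsS v x := by
    rw [div_pow, one_pow, mul_one_div, div_le_div_iff₀ (by positivity) (by positivity)]
    nlinarith
  linarith

lemma js_C_int (hd : 3 ≤ d) (hV : V ≠ 0) :
    Integrable (fun x => jsC m v x / jsS v x) (jsP m V) := by
  refine Integrable.mono' (((jsT_int m V).div_const 2).add
    ((js_inv_int m v V hd hV).div_const 2)) (Measurable.aestronglyMeasurable (by fun_prop)) ?_
  filter_upwards [js_S_pos m v V hd hV] with x hx
  have h := js_C_bound m v x hx 0 le_rfl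
  rw [add_zero] at h
  exact h

lemma js_main (hd : 3 ≤ d) (hV : V ≠ 0) :
    ∫ x, jsC m v x / jsS v x ∂(jsP m V) =
      V * (((d : ℝ) - 2) * ∫ x, 1 / jsS v x ∂(jsP m V)) := by
  have hd' : (3 : ℝ) ≤ d := by exact_mod_cast hd
  have hinv := js_inv_int m v V hd hV
  have t1 : Tendsto (fun n : ℕ => ∫ x, jsC m v x / (jsS v x + 1 / ((n : ℝ) + 1)) ∂(jsP m V)) atTop
      (nhds (∫ x, jsC m v x / jsS v x ∂(jsP m V))) := by
    refine tendsto_integral_of_dominated_convergence _ (fun n =>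
      Measurable.aestronglyMeasurable (by fun_prop)) (((jsT_int m V).div_const 2).add
      (hinv.div_const 2)) (fun n => ?_) ?_
    · filter_upwards [js_S_pos m v V hd hV] with x hx
      exact js_C_bound m v x hx _ (js_eps n).le
    · filter_upwards [js_S_pos m v V hd hV] with x hx
      simpa [div_eq_mul_inv] using (js_tendsto _ hx).const_mul (jsC m v x)
  have t2 : Tendsto (fun n : ℕ => ∫ x, (((d : ℝ) - 2) / (jsS v x + 1 / ((n : ℝ) + 1)) +
      2 * (1 / ((n : ℝ) + 1)) / (jsS v x + 1 / ((n : ℝ) + 1)) ^ 2) ∂(jsP m V)) atTop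
      (nhds (∫ x, ((d : ℝ) - 2) * (1 / jsS v x) ∂(jsP m V))) := by
    refine tendsto_integral_of_dominated_convergence (fun x => (d : ℝ) * (1 / jsS v x)) (fun n =>
      Measurable.aestronglyMeasurable (by fun_prop)) (hinv.const_mul _) (fun n => ?_) ?_
    · filter_upwards [js_S_pos m v V hd hV] with x hx
      have hε := js_eps n
      generalize 1 / ((n : ℝ) + 1) = ε at hε ⊢
      have h2 : (0 : ℝ) ≤ d - 2 := by linarith
      rw [Real.norm_of_nonneg (by positivity)]
      have a1 : ((d : ℝ) - 2) / (jsS v x + ε) ≤ (d - 2) * (1 / jsS v x) := by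
        rw [mul_one_div]; gcongr; linarith
      have a2 : 2 * ε / (jsS v x + ε) ^ 2 ≤ 2 * (1 / jsS v x) := by
        rw [mul_one_div, div_le_div_iff₀ (by positivity) (by positivity)]
        nlinarith [mul_pos hx hε]
      linarith
    · filter_upwards [js_S_pos m v V hd hV] with x hx
      have h1 := (js_tendsto _ hx).const_mul ((d : ℝ) - 2)
      have h2 := ((tendsto_one_div_add_atTop_nhds_zero_nat (𝕜 := ℝ)).const_mul 2).mul
        ((js_tendsto _ hx).pow 2)
      have h3 := h1.add h2
      simp only [mul_zero, zero_mul, add_zero] at h3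
      refine h3.congr fun n => ?_
      rw [div_pow, one_pow, mul_one_div, mul_one_div]
  have t3 := t2.const_mul (V : ℝ)
  rw [← integral_const_mul]
  refine tendsto_nhds_unique t1 (t3.congr fun n => ?_)
  exact ((js_stein_sum m v V hV _ (js_eps n)).2.2).symm
end

/-- James–Stein type estimator: for `X ∼ N(μ, σ²I_d)` with `d ≥ 3` and any
`v ∈ ℝ^d`, the estimator `X − (d−2)σ²(X−v)/‖X−v‖²` has risk
`σ²d − (d−2)²σ⁴ E_μ[1/‖X−v‖²]`, which is strictly smaller than `σ²d`. -/
theorem james_stein_risk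
    (d : ℕ) (hd : 3 ≤ d) (m v : EuclideanSpace ℝ (Fin d)) (σ : ℝ) (hσ : 0 < σ) :
    (∫ x, ‖x - (((d : ℝ) - 2) * σ ^ 2 / ‖x - v‖ ^ 2) • (x - v) - m‖ ^ 2
          ∂(gaussPi d m (σ ^ 2)) =
        σ ^ 2 * d -
          ((d : ℝ) - 2) ^ 2 * σ ^ 4 *
            ∫ x, (‖x - v‖ ^ 2)⁻¹ ∂(gaussPi d m (σ ^ 2))) ∧
    (∫ x, ‖x - (((d : ℝ) - 2) * σ ^ 2 / ‖x - v‖ ^ 2) • (x - v) - m‖ ^ 2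
          ∂(gaussPi d m (σ ^ 2)) < σ ^ 2 * d) := by
  have hV : (σ ^ 2).toNNReal ≠ 0 := by
    have : 0 < σ ^ 2 := by positivity
    simpa using hσ.ne'
  have hVc : (((σ ^ 2).toNNReal : NNReal) : ℝ) = σ ^ 2 := Real.coe_toNNReal _ (by positivity)
  have hmap : ∀ f : EuclideanSpace ℝ (Fin d) → ℝ, ∫ x, f x ∂(gaussPi d m (σ ^ 2)) =
      ∫ y, f ((EuclideanSpace.equiv (Fin d) ℝ).symm y) ∂(jsP (⇑m) (σ ^ 2).toNNReal) := by
    intro f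
    exact (EuclideanSpace.equiv (Fin d) ℝ).symm.toHomeomorph.measurableEmbedding.integral_map f
  have hS : ∀ y, ‖(EuclideanSpace.equiv (Fin d) ℝ).symm y - v‖ ^ 2 = jsS (⇑v) y := by
    intro y
    rw [EuclideanSpace.real_norm_sq_eq]
    simp [jsS]
  have hR : ∀ y, ‖(EuclideanSpace.equiv (Fin d) ℝ).symm y -
      (((d : ℝ) - 2) * σ ^ 2 / ‖(EuclideanSpace.equiv (Fin d) ℝ).symm y - v‖ ^ 2) •
        ((EuclideanSpace.equiv (Fin d) ℝ).symm y - v) - m‖ ^ 2 =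
      jsT (⇑m) y - 2 * (((d : ℝ) - 2) * σ ^ 2) * (jsC (⇑m) (⇑v) y / jsS (⇑v) y)
        + (((d : ℝ) - 2) * σ ^ 2) ^ 2 * (1 / jsS (⇑v) y) := by
    intro y
    rw [hS, EuclideanSpace.real_norm_sq_eq]
    set k := ((d : ℝ) - 2) * σ ^ 2
    set s := jsS (⇑v) y with hs
    have e : ∀ i, ((EuclideanSpace.equiv (Fin d) ℝ).symm y -
      (k / s) • ((EuclideanSpace.equiv (Fin d) ℝ).symm y - v) - m) i ^ 2 =
      (y i - m i) ^ 2 - 2 * (k / s) * ((y i - m i) * (y i - v i))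
        + (k / s) ^ 2 * (y i - v i) ^ 2 := by
      intro i; simp; ring
    simp_rw [e]
    rw [Finset.sum_add_distrib, Finset.sum_sub_distrib, ← Finset.mul_sum, ← Finset.mul_sum]
    change jsT (⇑m) y - 2 * (k / s) * jsC (⇑m) (⇑v) y + (k / s) ^ 2 * s = _
    by_cases h0 : s = 0
    · simp [h0]
    · field_simp
  have hT := jsT_int (⇑m) (σ ^ 2).toNNReal
  have hC := js_C_int (⇑m) (⇑v) (σ ^ 2).toNNReal hd hV
  have hI := js_inv_int (⇑m) (⇑v) (σ ^ 2).toNNReal hd hV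
  have hmain := js_main (⇑m) (⇑v) (σ ^ 2).toNNReal hd hV
  have hTv := jsT_val (⇑m) (σ ^ 2).toNNReal
  rw [hVc] at hmain hTv
  have hpos : 0 < ∫ y, 1 / jsS (⇑v) y ∂(jsP (⇑m) (σ ^ 2).toNNReal) := by
    rw [integral_pos_iff_support_of_nonneg
      (fun y => one_div_nonneg.2 (jsS_nonneg (⇑v) y)) hI]
    have h1 : ∀ᵐ y ∂(jsP (⇑m) (σ ^ 2).toNNReal),
        y ∈ Function.support (fun y => 1 / jsS (⇑v) y) := by
      filter_upwards [js_S_pos (⇑m) (⇑v) (σ ^ 2).toNNReal hd hV] with y hy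
      simpa using hy.ne'
    rw [measure_congr (s := Function.support (fun y => 1 / jsS (⇑v) y)) (eventuallyEq_univ.2 h1)]
    simp
  have key : ∫ x, ‖x - (((d : ℝ) - 2) * σ ^ 2 / ‖x - v‖ ^ 2) • (x - v) - m‖ ^ 2
          ∂(gaussPi d m (σ ^ 2)) =
        σ ^ 2 * d - ((d : ℝ) - 2) ^ 2 * σ ^ 4 *
            ∫ y, 1 / jsS (⇑v) y ∂(jsP (⇑m) (σ ^ 2).toNNReal) := by
    rw [hmap]
    simp_rw [hR]
    have hsub : Integrable (fun y => jsT (⇑m) y -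
        2 * (((d : ℝ) - 2) * σ ^ 2) * (jsC (⇑m) (⇑v) y / jsS (⇑v) y))
        (jsP (⇑m) (σ ^ 2).toNNReal) := hT.sub (hC.const_mul _)
    rw [integral_add hsub (hI.const_mul _), integral_sub hT (hC.const_mul _),
      integral_const_mul, integral_const_mul, hmain, hTv]
    ring
  refine ⟨?_, ?_⟩
  · rw [key, hmap]
    simp_rw [hS, one_div]
  · rw [key]
    have hd' : (0 : ℝ) < d - 2 := by
      have : (3 : ℝ) ≤ d := by exact_mod_cast hd
      linarith
    have : 0 < ((d : ℝ) - 2) ^ 2 * σ ^ 4 *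
      ∫ y, 1 / jsS (⇑v) y ∂(jsP (⇑m) (σ ^ 2).toNNReal) := by positivity
    linarith
end
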